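/- conv(X^{0,u}) equals the set of all (z,δ) ∈ R^n × R^m satisfying the nested linearization system with l replaced by 0, together with the mixing inequality Mix≤(S',p) for every p ∈ I and every S' ⊆ J with |S'∖S_p| ≤ u − 1. -/

import Mathlib

open Finset

noncomputable section

def Xset (n m l u : ℕ) (S : Fin m → Finset (Fin n)) : Set ((Fin n → ℝ) × (Fin m → ℝ)) :=
  {zd | (∀ j, zd.1 j = 0 ∨ zd.1 j = 1) ∧ (∀ i, zd.2 i = 0 ∨ zd.2 i = 1) ∧
        (∀ i, zd.2 i = ∏ j ∈ S i, (1 - zd.1 j)) ∧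
        (l : ℝ) ≤ ∑ j, zd.1 j ∧ ∑ j, zd.1 j ≤ (u : ℝ)}

def Dset (n m l u : ℕ) (S : Fin m → Finset (Fin n)) : Set (Fin m → ℝ) :=
  Prod.snd '' Xset n m l u S

def Xfiber (n m l u : ℕ) (S : Fin m → Finset (Fin n)) (δ : Fin m → ℝ) :
    Set (Fin n → ℝ) :=
  {z | (z, δ) ∈ Xset n m l u S}

/-- The family is closed under nonempty intersection. -/
def ClosedInter (n m : ℕ) (S : Fin m → Finset (Fin n)) : Prop :=
  ∀ i j : Fin m, (S i ∩ S j).Nonempty → ∃ k, S i ∩ S j = S k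

/-- The family is proper. -/
def ProperFam (n m l u : ℕ) (S : Fin m → Finset (Fin n)) : Prop :=
  ClosedInter n m S ∧
  ∃ D : Finset (Fin m → ℝ), (D : Set (Fin m → ℝ)) = Dset n m l u S ∧ D.card = m + 1 ∧
    AffineIndependent ℝ (Subtype.val : {x : Fin m → ℝ // x ∈ D} → (Fin m → ℝ))

/-- `f x ≤ c` is valid and defines a facet of `conv P`. -/
def IsFacet {E : Type*} [AddCommGroup E] [Module ℝ E] (P : Set E) (f : E → ℝ) (c : ℝ) :
    Prop :=
  (∀ x ∈ P, f x ≤ c) ∧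
  Module.finrank ℝ (affineSpan ℝ {x ∈ convexHull ℝ P | f x = c}).direction + 1 =
    Module.finrank ℝ (affineSpan ℝ P).direction

def SS (n m : ℕ) (S : Fin m → Finset (Fin n)) : ℕ → Finset (Fin n) :=
  fun k => if h : 1 ≤ k ∧ k ≤ m then S ⟨k - 1, by omega⟩ else if k = 0 then ∅ else Finset.univ

def dd (m : ℕ) (δ : Fin m → ℝ) : ℕ → ℝ :=
  fun k => if h : 1 ≤ k ∧ k ≤ m then δ ⟨k - 1, by omega⟩ else if k = 0 then 1 else 0

def mixLeLHS (n m u : ℕ) (S : Fin m → Finset (Fin n)) (p : ℕ) (S' : Finset (Fin n))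
    (zd : (Fin n → ℝ) × (Fin m → ℝ)) : ℝ :=
  ∑ j ∈ S', zd.1 j + ((u : ℝ) - ((S' \ SS n m S p).card : ℝ)) * dd m zd.2 p
    + ∑ i ∈ Finset.Icc (p + 1) m,
        (((S' \ SS n m S (i - 1)).card : ℝ) - ((S' \ SS n m S i).card : ℝ)) * dd m zd.2 i

def MixLe (n m u : ℕ) (S : Fin m → Finset (Fin n)) (p : ℕ) (S' : Finset (Fin n))
    (zd : (Fin n → ℝ) × (Fin m → ℝ)) : Prop :=
  mixLeLHS n m u S p S' zd ≤ (u : ℝ)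

def mixGeLHS (n m l : ℕ) (S : Fin m → Finset (Fin n)) (p : ℕ) (S' : Finset (Fin n))
    (zd : (Fin n → ℝ) × (Fin m → ℝ)) : ℝ :=
  (((S' ∪ SS n m S p).card : ℝ) - (n : ℝ) + (l : ℝ)) * dd m zd.2 p
    + ∑ i ∈ Finset.Icc (p + 1) m,
        (((S' ∪ SS n m S i).card : ℝ) - ((S' ∪ SS n m S (i - 1)).card : ℝ)) * dd m zd.2 i
    - ∑ j ∈ S', zd.1 j

def MixGe (n m l : ℕ) (S : Fin m → Finset (Fin n)) (p : ℕ) (S' : Finset (Fin n))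
    (zd : (Fin n → ℝ) × (Fin m → ℝ)) : Prop :=
  mixGeLHS n m l S p S' zd ≤ 0

def NestedLin (n m l u : ℕ) (S : Fin m → Finset (Fin n))
    (zd : (Fin n → ℝ) × (Fin m → ℝ)) : Prop :=
  ((l : ℝ) ≤ ∑ j, zd.1 j) ∧ (∑ j, zd.1 j ≤ (u : ℝ)) ∧
  (∀ i : Fin m, ∀ j ∈ S i, zd.1 j + zd.2 i ≤ 1) ∧
  (1 ≤ dd m zd.2 1 + ∑ j ∈ SS n m S 1, zd.1 j) ∧
  (0 ≤ dd m zd.2 m) ∧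
  (∀ j, 0 ≤ zd.1 j) ∧
  (∀ j, j ∉ SS n m S m → zd.1 j ≤ 1) ∧
  (∀ i : ℕ, 1 ≤ i → i + 1 ≤ m → dd m zd.2 (i + 1) ≤ dd m zd.2 i) ∧
  (∀ i : ℕ, 1 ≤ i → i + 1 ≤ m →
    dd m zd.2 i - dd m zd.2 (i + 1) ≤ ∑ j ∈ SS n m S (i + 1) \ SS n m S i, zd.1 j)

def FollowsPattern (n : ℕ) (α α' : Fin n → ℝ) : Prop :=
  (∀ j, (0 ≤ α j → 0 ≤ α' j) ∧ (α j ≤ 0 → α' j ≤ 0)) ∧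
  (∀ j₁ j₂ : Fin n, α j₂ ≤ α j₁ → α' j₂ ≤ α' j₁)

def IsFacetSet {E : Type*} [AddCommGroup E] [Module ℝ E] (P : Set E) (F : Set E) : Prop :=
  ∃ (f : E →ₗ[ℝ] ℝ) (c : ℝ), (∀ x ∈ P, f x ≤ c) ∧
    F = {x ∈ convexHull ℝ P | f x = c} ∧
    Module.finrank ℝ (affineSpan ℝ F).direction + 1 =
      Module.finrank ℝ (affineSpan ℝ P).direction

/-! Write `d 0 = 1 ≥ d 1 ≥ ⋯ ≥ d m ≥ d (m + 1) = 0` for the values of `δ` along the chain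
`∅ = S 0 ⊆ ⋯ ⊆ S m ⊆ S (m + 1) = J`. A point `(z, δ)` lies in the convex hull exactly when `z` lies
in the Minkowski sum of the polytopes `(d k - d (k + 1)) • P k`, where `P k` is the convex hull of
the sets of at most `u` elements that avoid `S k` and, for `k < m`, meet `S (k + 1) \ S k`. By
Hahn–Banach it suffices to bound `∑ j, α j * z j`, for each objective `α`, by the value of the sum
of greedy sets `A k` for `P k`. The comparison is made separately on each level set of `α`: upper
level sets are controlled by the mixing inequalities, lower level sets by the inequalities
`d k - d (k + 1) ≤ ∑ j ∈ S (k + 1) \ S k, z j`. -/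

section LevelSets

variable {ι R : Type*} [CommRing R] [LinearOrder R] [IsStrictOrderedRing R]

lemma sum_sub_mul_nonpos_of_sum_filter_le_nonpos (s : Finset ι) (f w : ι → R) :
    ∀ b, (∀ i ∈ s, b ≤ f i) → (∀ c, b < c → ∑ i ∈ s with c ≤ f i, w i ≤ 0) →
      ∑ i ∈ s, (f i - b) * w i ≤ 0 := by
  classical
  induction s using Finset.induction_on_min_value f with
  | empty => simp
  | insert a s ha hmin ih =>
    intro b hb hsum
    have hba : b ≤ f a := hb a (mem_insert_self a s)
    have habove : ∑ i ∈ s, (f i - f a) * w i ≤ 0 := by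
      refine ih (f a) hmin fun c hc ↦ ?_
      simpa only [filter_insert, hc.not_ge, if_false] using hsum c (hba.trans_lt hc)
    have hbelow : (f a - b) * ∑ i ∈ insert a s, w i ≤ 0 := by
      rcases hba.eq_or_lt with h | h
      · simp [h]
      · refine mul_nonpos_of_nonneg_of_nonpos (sub_nonneg.2 hba) ?_
        simpa [filter_insert, filter_true_of_mem hmin] using hsum (f a) h
    have hsplit : ∑ i ∈ insert a s, (f i - b) * w i =
        ∑ i ∈ s, (f i - f a) * w i + (f a - b) * ∑ i ∈ insert a s, w i := by
      rw [sum_insert ha, sum_insert ha, mul_add, mul_sum, add_left_comm, ← sum_add_distrib]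
      exact congrArg _ (sum_congr rfl fun i _ ↦ by ring)
    rw [hsplit]
    exact add_nonpos habove hbelow

lemma sum_mul_nonpos_of_levels [Fintype ι] {f w : ι → R}
    (hupper : ∀ c, 0 < c → ∑ i with c ≤ f i, w i ≤ 0)
    (hlower : ∀ c, 0 < c → 0 ≤ ∑ i with f i ≤ -c, w i) : ∑ i, f i * w i ≤ 0 := by
  have hpos : ∑ i, (max (f i) 0 - 0) * w i ≤ 0 := by
    refine sum_sub_mul_nonpos_of_sum_filter_le_nonpos univ _ w 0 (by simp) fun c hc ↦ ?_
    simpa only [le_max_iff, hc.not_ge, or_false] using hupper c hc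
  have hneg : ∑ i, (max (-f i) 0 - 0) * -w i ≤ 0 := by
    refine sum_sub_mul_nonpos_of_sum_filter_le_nonpos univ _ (-w) 0 (by simp) fun c hc ↦ ?_
    simpa only [le_max_iff, hc.not_ge, or_false, le_neg, Pi.neg_apply, sum_neg_distrib,
      Left.neg_nonpos_iff] using hlower c hc
  calc ∑ i, f i * w i
      = ∑ i, (max (f i) 0 - 0) * w i + ∑ i, (max (-f i) 0 - 0) * -w i := by
        rw [← sum_add_distrib]
        refine sum_congr rfl fun i _ ↦ ?_
        linear_combination -w i * max_zero_sub_max_neg_zero_eq_self (f i)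
    _ ≤ 0 := add_nonpos hpos hneg

end LevelSets

section Greedy

variable {ι : Type*}

lemma exists_subset_card_eq_forall_le [DecidableEq ι] {β : Type*} [LinearOrder β] (f : ι → β)
    {R : Finset ι} {r : ℕ} (hr : r ≤ #R) :
    ∃ A ⊆ R, #A = r ∧ ∀ a ∈ A, ∀ b ∈ R \ A, f b ≤ f a := by
  induction r with
  | zero => exact ⟨∅, by simp⟩
  | succ r ih =>
    obtain ⟨A, hAR, hA, htop⟩ := ih (by omega)
    have hrest : (R \ A).Nonempty := by
      rw [← card_pos, card_sdiff_of_subset hAR]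
      omega
    obtain ⟨e, he, hmax⟩ := exists_max_image (R \ A) f hrest
    rw [mem_sdiff] at he
    refine ⟨insert e A, insert_subset he.1 hAR, by rw [card_insert_of_notMem he.2, hA], ?_⟩
    intro a ha b hb
    have hb' : b ∈ R \ A := sdiff_subset_sdiff le_rfl (subset_insert e A) hb
    rcases mem_insert.1 ha with rfl | ha
    exacts [hmax b hb', htop a ha b hb']

lemma exists_pos_subset_card_filter_le {β : Type*} [LinearOrder β] [Zero β] (f : ι → β)
    (R : Finset ι) (r : ℕ) :
    ∃ A ⊆ R, #A ≤ r ∧ (∀ a ∈ A, 0 < f a) ∧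
      ∀ c, 0 < c → min r #{j ∈ R | c ≤ f j} ≤ #{j ∈ A | c ≤ f j} := by
  classical
  rcases le_total #{j ∈ R | 0 < f j} r with hr | hr
  · refine ⟨{j ∈ R | 0 < f j}, filter_subset _ _, hr, fun a ha ↦ (mem_filter.1 ha).2, ?_⟩
    refine fun c hc ↦ min_le_of_right_le (card_le_card fun j hj ↦ ?_)
    rw [mem_filter] at hj
    simp only [mem_filter]
    exact ⟨⟨hj.1, hc.trans_le hj.2⟩, hj.2⟩
  · obtain ⟨A, hAR, hA, htop⟩ := exists_subset_card_eq_forall_le f hr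
    refine ⟨A, hAR.trans (filter_subset _ _), hA.le, fun a ha ↦ (mem_filter.1 (hAR ha)).2, ?_⟩
    intro c hc
    by_cases hall : ∀ a ∈ A, c ≤ f a
    · rw [filter_true_of_mem hall, hA]
      exact min_le_left _ _
    · obtain ⟨a, ha, hac⟩ := not_forall₂.1 hall
      refine min_le_of_right_le (card_le_card fun j hj ↦ ?_)
      obtain ⟨hjR, hcj⟩ := mem_filter.1 hj
      refine mem_filter.2 ⟨?_, hcj⟩
      by_contra hjA
      refine hac (hcj.trans (htop a ha j (mem_sdiff.2 ⟨?_, hjA⟩)))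
      exact mem_filter.2 ⟨hjR, hc.trans_le hcj⟩

variable [DecidableEq ι]

/-- The least possible size of `A ∩ T` over all sets `A` that meet `E`, where an empty `E` imposes
no condition. Dually, `demand E Tᶜ` is the number of elements of `A` that may be forced to lie
outside `T`. -/
def demand (E T : Finset ι) : ℕ := if E.Nonempty ∧ E ⊆ T then 1 else 0

lemma demand_le_one (E T : Finset ι) : demand E T ≤ 1 := by
  unfold demand
  split_ifs <;> simp

variable [Fintype ι]

/-- `A` behaves like a maximizer of `∑ j ∈ A, α j` among the sets of at most `u` elements that are
disjoint from `F` and, unless `E` is empty, meet `E`: it meets every upper level set of `α` at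
positive height as much, and every lower level set at negative height as little, as such a set
can. -/
structure IsGreedy (α : ι → ℝ) (u : ℕ) (F E A : Finset ι) : Prop where
  disjoint : Disjoint A F
  card_le : #A ≤ u
  meets : E.Nonempty → ¬Disjoint A E
  upper : ∀ c, 0 < c →
    min (u - demand E ({j | c ≤ α j} : Finset ι)ᶜ) #(({j | c ≤ α j} : Finset ι) \ F) ≤
      #{j ∈ A | c ≤ α j}
  lower : ∀ c, 0 < c → #{j ∈ A | α j ≤ -c} ≤ demand E ({j | α j ≤ -c} : Finset ι)

lemma filter_univ_sdiff_eq (p : ι → Prop) [DecidablePred p] (F : Finset ι) :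
    ({j | p j} : Finset ι) \ F = {j ∈ Fᶜ | p j} := by
  ext j
  simp [and_comm]

lemma exists_isGreedy_empty (α : ι → ℝ) (u : ℕ) (F : Finset ι) : ∃ A, IsGreedy α u F ∅ A := by
  obtain ⟨A, hAF, hAu, hpos, htop⟩ := exists_pos_subset_card_filter_le α Fᶜ u
  refine ⟨A, disjoint_left.2 fun j hj ↦ mem_compl.1 (hAF hj), hAu, by simp, ?_, ?_⟩
  · intro c hc
    simpa [demand, filter_univ_sdiff_eq] using htop c hc
  · intro c hc
    rw [filter_false_of_mem fun j hj ↦ by linarith [hpos j hj]]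
    simp

lemma exists_isGreedy_of_nonempty (α : ι → ℝ) {u : ℕ} (hu : 0 < u) {F E : Finset ι}
    (hE : E.Nonempty) (hEF : Disjoint E F) : ∃ A, IsGreedy α u F E A := by
  obtain ⟨e, he, hmax⟩ := exists_max_image E α hE
  have heF : e ∈ Fᶜ := mem_compl.2 (disjoint_left.1 hEF he)
  obtain ⟨A, hAF, hAu, hpos, htop⟩ := exists_pos_subset_card_filter_le α (Fᶜ.erase e) (u - 1)
  have heA : e ∉ A := fun h ↦ notMem_erase e _ (hAF h)
  refine ⟨insert e A, ?_, ?_, fun _ ↦ not_disjoint_iff.2 ⟨e, mem_insert_self e A, he⟩, ?_, ?_⟩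
  · exact disjoint_left.2 fun j hj ↦
      mem_compl.1 (insert_subset heF (hAF.trans (erase_subset _ _)) hj)
  · rw [card_insert_of_notMem heA]
    omega
  · intro c hc
    have hA := htop c hc
    rw [filter_univ_sdiff_eq]
    by_cases hec : c ≤ α e
    · rw [filter_insert, if_pos hec, card_insert_of_notMem (by simp [heA])]
      rw [filter_erase, card_erase_of_mem (mem_filter.2 ⟨heF, hec⟩)] at hA
      omega
    · have hdemand : demand E ({j | c ≤ α j} : Finset ι)ᶜ = 1 := by
        refine if_pos ⟨hE, fun j hj ↦ ?_⟩
        simpa using (hmax j hj).trans_lt (not_le.1 hec)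
      rw [hdemand, filter_insert, if_neg hec]
      rwa [filter_erase, erase_eq_of_notMem (by simp [hec])] at hA
  · intro c hc
    rw [filter_insert, filter_false_of_mem fun j hj ↦ by linarith [hpos j hj]]
    split_ifs with hec
    · rw [demand, if_pos ⟨hE, fun j hj ↦ by simpa using (hmax j hj).trans hec⟩]
      simp
    · simp

lemma exists_isGreedy (α : ι → ℝ) {u : ℕ} (hu : 0 < u) {F E : Finset ι} (hEF : Disjoint E F) :
    ∃ A, IsGreedy α u F E A := by
  rcases E.eq_empty_or_nonempty with rfl | hE
  exacts [exists_isGreedy_empty α u F, exists_isGreedy_of_nonempty α hu hE hEF]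

end Greedy
section MixPoint

variable {ι : Type*} [DecidableEq ι]

/-- The `k`-th layer of the chain `s 0 ⊆ ⋯ ⊆ s m`. It is empty from `k = m` on: no element beyond
the last set of the chain is ever forced to be chosen. -/
def layer (s : ℕ → Finset ι) (m k : ℕ) : Finset ι := if k < m then s (k + 1) \ s k else ∅

lemma disjoint_layer (s : ℕ → Finset ι) (m k : ℕ) : Disjoint (layer s m k) (s k) := by
  unfold layer
  split_ifs
  exacts [sdiff_disjoint, disjoint_empty_left _]

/-- The nested linearization system and the mixing inequalities for a chain
`∅ = s 0 ⊆ ⋯ ⊆ s (m + 1) = univ` and values `1 = d 0 ≥ ⋯ ≥ d (m + 1) = 0`, with the mixing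
inequalities rewritten in terms of the decrements `d k - d (k + 1)`. The bounds `z j ≤ 1` and
`∑ j, z j ≤ u` are `add_le_one` and `mix` at the index `m + 1`. -/
structure IsMixPoint (s : ℕ → Finset ι) (m u : ℕ) (z : ι → ℝ) (d : ℕ → ℝ) : Prop where
  nonneg : ∀ j, 0 ≤ z j
  add_le_one : ∀ i ≤ m + 1, ∀ j ∈ s i, z j + d i ≤ 1
  succ_le : ∀ k ≤ m, d (k + 1) ≤ d k
  cover : ∀ k < m, d k - d (k + 1) ≤ ∑ j ∈ s (k + 1) \ s k, z j
  mix : ∀ p ≤ m + 1, ∀ T : Finset ι, #(T \ s p) < u →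
    ∑ j ∈ T, z j ≤ u * (1 - d p) + ∑ k ∈ Ico p (m + 1), #(T \ s k) * (d k - d (k + 1))

variable {s : ℕ → Finset ι} {m u : ℕ} {z : ι → ℝ} {d : ℕ → ℝ}

lemma sum_sdiff_le_of_add_le_one [Fintype ι] (hs : Monotone s) (hs_top : s (m + 1) = univ)
    (hzd : ∀ i ≤ m + 1, ∀ j ∈ s i, z j + d i ≤ 1) (T : Finset ι) {p : ℕ} (hp : p ≤ m + 1) :
    ∑ j ∈ T \ s p, z j ≤
      #(T \ s p) * (1 - d p) + ∑ k ∈ Ico p (m + 1), #(T \ s k) * (d k - d (k + 1)) := by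
  induction hp using Nat.decreasingInduction with
  | self => rw [hs_top, sdiff_eq_empty_iff_subset.2 (subset_univ T)]; simp
  | of_succ k hk ih =>
    have hsub : T \ s (k + 1) ⊆ T \ s k := sdiff_subset_sdiff le_rfl (hs k.le_succ)
    have hlayer : ∑ j ∈ (T \ s k) \ (T \ s (k + 1)), z j ≤
        (#(T \ s k) - #(T \ s (k + 1))) * (1 - d (k + 1)) := by
      rw [← cast_card_sdiff hsub, ← nsmul_eq_mul]
      refine sum_le_card_nsmul _ _ _ fun j hj ↦ ?_
      simp only [mem_sdiff, not_and, not_not] at hj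
      linarith [hzd (k + 1) hk j (hj.2 hj.1.1)]
    rw [sum_eq_sum_Ico_succ_bot hk]
    linear_combination hlayer + ih - sum_sdiff hsub (f := z)

namespace IsMixPoint

lemma convexCombination {z' : ι → ℝ} {d' : ℕ → ℝ} (h : IsMixPoint s m u z d)
    (h' : IsMixPoint s m u z' d') {a b : ℝ} (ha : 0 ≤ a) (hb : 0 ≤ b) (hab : a + b = 1) :
    IsMixPoint s m u (a • z + b • z') (a • d + b • d') where
  nonneg j := add_nonneg (mul_nonneg ha (h.nonneg j)) (mul_nonneg hb (h'.nonneg j))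
  add_le_one i hi j hj := by
    simp only [Pi.add_apply, Pi.smul_apply, smul_eq_mul]
    linear_combination a * h.add_le_one i hi j hj + b * h'.add_le_one i hi j hj + hab
  succ_le k hk :=
    add_le_add (mul_le_mul_of_nonneg_left (h.succ_le k hk) ha)
      (mul_le_mul_of_nonneg_left (h'.succ_le k hk) hb)
  cover k hk := by
    simp only [Pi.add_apply, Pi.smul_apply, smul_eq_mul, sum_add_distrib, ← mul_sum]
    linear_combination a * h.cover k hk + b * h'.cover k hk
  mix p hp T hT := by
    have hsum : ∑ k ∈ Ico p (m + 1), (#(T \ s k) : ℝ) *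
          ((a * d k + b * d' k) - (a * d (k + 1) + b * d' (k + 1))) =
        a * ∑ k ∈ Ico p (m + 1), #(T \ s k) * (d k - d (k + 1)) +
          b * ∑ k ∈ Ico p (m + 1), #(T \ s k) * (d' k - d' (k + 1)) := by
      rw [mul_sum, mul_sum, ← sum_add_distrib]
      exact sum_congr rfl fun k _ ↦ by ring
    simp only [Pi.add_apply, Pi.smul_apply, smul_eq_mul, sum_add_distrib, ← mul_sum, hsum]
    linear_combination a * h.mix p hp T hT + b * h'.mix p hp T hT + u * hab

lemma demand_layer_le_sum (h : IsMixPoint s m u z d) (T : Finset ι) {k : ℕ} :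
    (d k - d (k + 1)) * demand (layer s m k) T ≤ ∑ j ∈ T ∩ (s (k + 1) \ s k), z j := by
  by_cases hT : (layer s m k).Nonempty ∧ layer s m k ⊆ T
  · obtain ⟨hne, hsub⟩ := hT
    have hk : k < m := by
      by_contra hk
      simp [layer, hk] at hne
    rw [demand, if_pos ⟨hne, hsub⟩, inter_eq_right.2 (by simpa [layer, hk] using hsub)]
    simpa using h.cover k hk
  · rw [demand, if_neg hT, Nat.cast_zero, mul_zero]
    exact sum_nonneg fun j _ ↦ h.nonneg j

lemma sum_demand_layer_le (hs : Monotone s) (h : IsMixPoint s m u z d) (T : Finset ι) (p : ℕ) :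
    ∑ k ∈ range p, (d k - d (k + 1)) * demand (layer s m k) T ≤ ∑ j ∈ T, z j := by
  have hinc (k : ℕ) : ∑ j ∈ T ∩ (s (k + 1) \ s k), z j =
      ∑ j ∈ T ∩ s (k + 1), z j - ∑ j ∈ T ∩ s k, z j := by
    have hdistrib : T ∩ (s (k + 1) \ s k) = (T ∩ s (k + 1)) \ (T ∩ s k) :=
      inf_sdiff_distrib_left _ _ _
    rw [eq_sub_iff_add_eq, hdistrib]
    exact sum_sdiff (inter_subset_inter_left (hs k.le_succ))
  calc ∑ k ∈ range p, (d k - d (k + 1)) * demand (layer s m k) T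
      ≤ ∑ k ∈ range p, ∑ j ∈ T ∩ (s (k + 1) \ s k), z j :=
        sum_le_sum fun k _ ↦ h.demand_layer_le_sum T
    _ = ∑ j ∈ T ∩ s p, z j - ∑ j ∈ T ∩ s 0, z j := by
        simp only [hinc, sum_range_sub fun k ↦ ∑ j ∈ T ∩ s k, z j]
    _ ≤ ∑ j ∈ T ∩ s p, z j := sub_le_self _ (sum_nonneg fun j _ ↦ h.nonneg j)
    _ ≤ ∑ j ∈ T, z j := sum_le_sum_of_subset_of_nonneg inter_subset_left fun j _ _ ↦ h.nonneg j

variable [Fintype ι]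

lemma demand_layer_sdiff (hs : Monotone s) (T : Finset ι) {k p : ℕ} (hkp : k < p) :
    demand (layer s m k) (s p \ T) = demand (layer s m k) Tᶜ := by
  have hlayer : layer s m k ⊆ s p := by
    unfold layer
    split_ifs
    exacts [sdiff_subset.trans (hs hkp), empty_subset _]
  unfold demand
  congr 2
  rw [subset_sdiff, and_iff_right hlayer, subset_compl_iff_disjoint_right]

-- The mixing inequality that yields the bound is the one for `T ∪ s p`, where `p` is the first
-- index with `#(T \ s p) < u`; the part of `s p` outside `T` pays for the forced elements.
lemma sum_le_sum_min (hs : Monotone s) (hs_top : s (m + 1) = univ) (hd : d 0 = 1) (hu : 0 < u)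
    (h : IsMixPoint s m u z d) (T : Finset ι) :
    ∑ j ∈ T, z j ≤ ∑ k ∈ range (m + 1),
      (d k - d (k + 1)) * min (u - demand (layer s m k) Tᶜ) #(T \ s k) := by
  have htop : T \ s (m + 1) = ∅ := hs_top ▸ sdiff_eq_empty_iff_subset.2 (subset_univ T)
  have hex : ∃ p, #(T \ s p) < u := ⟨m + 1, by rwa [htop]⟩
  obtain ⟨p, hp, hpmin⟩ : ∃ p, #(T \ s p) < u ∧ ∀ k < p, u ≤ #(T \ s k) :=
    ⟨Nat.find hex, Nat.find_spec hex, fun k hk ↦ not_lt.1 (Nat.find_min hex hk)⟩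
  have hpm : p ≤ m + 1 := by
    by_contra! hlt
    have hcard := hpmin _ hlt
    rw [htop, card_empty] at hcard
    omega
  have hsdiff {k : ℕ} (hk : p ≤ k) : (T ∪ s p) \ s k = T \ s k := by
    rw [union_sdiff_distrib, sdiff_eq_empty_iff_subset.2 (hs hk), union_empty]
  have hmix := h.mix p hpm (T ∪ s p) (by rwa [hsdiff le_rfl])
  have hforced := h.sum_demand_layer_le hs (s p \ T) p
  have htel : ∑ k ∈ range p, (d k - d (k + 1)) = 1 - d p := by rw [sum_range_sub', hd]
  have hsmall : ∑ k ∈ range p,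
        (d k - d (k + 1)) * ↑(min (u - demand (layer s m k) Tᶜ) #(T \ s k)) =
      u * (1 - d p) - ∑ k ∈ range p, (d k - d (k + 1)) * demand (layer s m k) (s p \ T) := by
    rw [← htel, mul_sum, ← sum_sub_distrib]
    refine sum_congr rfl fun k hk ↦ ?_
    have hkp := mem_range.1 hk
    have hle := demand_le_one (layer s m k) Tᶜ
    rw [min_eq_left ((Nat.sub_le _ _).trans (hpmin k hkp)), demand_layer_sdiff hs T hkp,
      Nat.cast_sub (by omega)]
    ring
  have hlarge : ∑ k ∈ Ico p (m + 1),
        (d k - d (k + 1)) * ↑(min (u - demand (layer s m k) Tᶜ) #(T \ s k)) =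
      ∑ k ∈ Ico p (m + 1), #((T ∪ s p) \ s k) * (d k - d (k + 1)) := by
    refine sum_congr rfl fun k hk ↦ ?_
    have hpk := (mem_Ico.1 hk).1
    have hcard : #(T \ s k) ≤ #(T \ s p) := card_le_card (sdiff_subset_sdiff le_rfl (hs hpk))
    have hle := demand_le_one (layer s m k) Tᶜ
    rw [hsdiff hpk, min_eq_right (by omega), mul_comm]
  rw [← sum_range_add_sum_Ico _ hpm, hsmall, hlarge]
  have hunion : ∑ j ∈ T ∪ s p, z j = ∑ j ∈ T, z j + ∑ j ∈ s p \ T, z j := by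
    rw [← union_sdiff_self_eq_union, sum_union disjoint_sdiff]
  linarith

end IsMixPoint

lemma IsMixPoint.sum_decrement_of_disjoint [Fintype ι] (hs : Monotone s)
    (h : IsMixPoint s m u z d) (hd : d (m + 1) = 0) {α : ι → ℝ} {A : ℕ → Finset ι}
    (hA : ∀ k, IsGreedy α u (s k) (layer s m k) (A k)) {i : ℕ} (hi : i ≤ m) :
    ∑ k ∈ range (m + 1) with Disjoint (A k) (s i), (d k - d (k + 1)) = d i := by
  have hbelow : ∀ k < i, Disjoint (A k) (s i) → d k - d (k + 1) = 0 := by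
    intro k hk hAi
    have hlayer : layer s m k = ∅ := by
      by_contra hne
      refine (hA k).meets (nonempty_iff_ne_empty.2 hne) (hAi.mono_right ?_)
      rw [layer, if_pos (by omega)]
      exact sdiff_subset.trans (hs hk)
    rw [layer, if_pos (by omega)] at hlayer
    have hcover := h.cover k (by omega)
    rw [hlayer, sum_empty] at hcover
    exact le_antisymm hcover (sub_nonneg.2 (h.succ_le k (by omega)))
  calc ∑ k ∈ range (m + 1) with Disjoint (A k) (s i), (d k - d (k + 1))
      = ∑ k ∈ Ico i (m + 1), (d k - d (k + 1)) := by
        refine (sum_subset (fun k hk ↦ ?_) fun k hk hki ↦ ?_).symm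
        · rw [mem_Ico] at hk
          exact mem_filter.2 ⟨mem_range.2 hk.2, (hA k).disjoint.mono_right (hs hk.1)⟩
        · rw [mem_filter, mem_range] at hk
          exact hbelow k (by simpa [hk.1] using hki) hk.2
    _ = d i := by
        rw [← neg_inj, ← sum_neg_distrib]
        simp only [neg_sub]
        rw [sum_Ico_sub d (by omega), hd, zero_sub]

/-- The `0/1` incidence vector of a set. -/
def incidence (A : Finset ι) (j : ι) : ℝ := if j ∈ A then 1 else 0

lemma sum_incidence (A T : Finset ι) : ∑ j ∈ T, incidence A j = #(T ∩ A) := by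
  simp only [incidence, sum_boole, filter_mem_eq_inter]

lemma incidence_nonneg (A : Finset ι) (j : ι) : 0 ≤ incidence A j := by
  unfold incidence
  split_ifs <;> simp

lemma sum_sdiff_incidence {A F : Finset ι} (hAF : Disjoint A F) (T : Finset ι) :
    ∑ j ∈ T \ F, incidence A j = ∑ j ∈ T, incidence A j := by
  rw [sum_incidence, sum_incidence, sdiff_inter_right_comm, sdiff_eq_self_of_disjoint]
  exact hAF.mono_left inter_subset_right

lemma one_le_sum_incidence {A F : Finset ι} (hAF : ¬Disjoint A F) :
    1 ≤ ∑ j ∈ F, incidence A j := by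
  rw [sum_incidence, Nat.one_le_cast, one_le_card, inter_comm]
  exact not_disjoint_iff_nonempty_inter.1 hAF

lemma sum_sum_smul_incidence {κ : Type*} (K : Finset κ) (w : κ → ℝ) (A : κ → Finset ι)
    (p : ι → Prop) [DecidablePred p] [Fintype ι] :
    ∑ j with p j, (∑ k ∈ K, w k • incidence (A k)) j = ∑ k ∈ K, w k * #{j ∈ A k | p j} := by
  simp only [Finset.sum_apply, Pi.smul_apply, smul_eq_mul]
  rw [sum_comm]
  refine sum_congr rfl fun k _ ↦ ?_
  rw [← mul_sum, sum_incidence, filter_inter, univ_inter]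

lemma IsMixPoint.sum_mul_le_of_isGreedy [Fintype ι] (hs : Monotone s) (hs_top : s (m + 1) = univ)
    (hd : d 0 = 1) (hu : 0 < u) (h : IsMixPoint s m u z d) {α : ι → ℝ} {A : ℕ → Finset ι}
    (hA : ∀ k, IsGreedy α u (s k) (layer s m k) (A k)) :
    ∑ j, α j * z j ≤
      ∑ j, α j * (∑ k ∈ range (m + 1), (d k - d (k + 1)) • incidence (A k)) j := by
  rw [← sub_nonpos, ← sum_sub_distrib]
  simp only [← mul_sub]
  have hdecr {k : ℕ} (hk : k ∈ range (m + 1)) : 0 ≤ d k - d (k + 1) :=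
    sub_nonneg.2 (h.succ_le k (Nat.lt_succ_iff.1 (mem_range.1 hk)))
  refine sum_mul_nonpos_of_levels (fun c hc ↦ ?_) (fun c hc ↦ ?_)
  · rw [sum_sub_distrib, sub_nonpos, sum_sum_smul_incidence]
    refine (h.sum_le_sum_min hs hs_top hd hu _).trans (sum_le_sum fun k hk ↦ ?_)
    exact mul_le_mul_of_nonneg_left (mod_cast (hA k).upper c hc) (hdecr hk)
  · rw [sum_sub_distrib, sub_nonneg, sum_sum_smul_incidence]
    refine (sum_le_sum fun k hk ↦ ?_).trans (h.sum_demand_layer_le hs _ (m + 1))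
    exact mul_le_mul_of_nonneg_left (mod_cast (hA k).lower c hc) (hdecr hk)

lemma isMixPoint_incidence [Fintype ι] (hs : Monotone s) (hs_top : s (m + 1) = univ)
    {A : Finset ι} (hA : #A ≤ u) (hd : ∀ k ≤ m, d k = if Disjoint A (s k) then 1 else 0)
    (hd_top : d (m + 1) = 0) : IsMixPoint s m u (incidence A) d := by
  have hd_cases : ∀ k ≤ m + 1, d k = 0 ∨ (k ≤ m ∧ d k = 1 ∧ Disjoint A (s k)) := by
    intro k hk
    rcases hk.eq_or_lt with rfl | hk
    · exact Or.inl hd_top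
    · rw [hd k (by omega)]
      split_ifs with hAk
      exacts [Or.inr ⟨by omega, rfl, hAk⟩, Or.inl rfl]
  have hzd : ∀ i ≤ m + 1, ∀ j ∈ s i, incidence A j + d i ≤ 1 := by
    intro i hi j hj
    rcases hd_cases i hi with h | ⟨-, h, hAi⟩
    · unfold incidence; split_ifs <;> simp [h]
    · simp [incidence, h, disjoint_right.1 hAi hj]
  have hsucc : ∀ k ≤ m, d (k + 1) ≤ d k := by
    intro k hk
    rcases hd_cases (k + 1) (by omega) with h | ⟨-, h, hAk⟩
    · rw [h, hd k hk]
      split_ifs <;> simp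
    · rw [h, hd k hk, if_pos (hAk.mono_right (hs k.le_succ))]
  refine ⟨incidence_nonneg A, hzd, hsucc, fun k hk ↦ ?_, fun p hp T _ ↦ ?_⟩
  · have hsum := sum_nonneg fun j (_ : j ∈ s (k + 1) \ s k) ↦ incidence_nonneg A j
    rw [hd k hk.le, hd (k + 1) hk]
    split_ifs with hAk hAk'
    · rwa [sub_self]
    · rw [sum_sdiff_incidence hAk, sub_zero]
      exact one_le_sum_incidence hAk'
    · linarith
    · rwa [sub_self]
  · rcases hd_cases p hp with h | ⟨-, h, hAp⟩
    · have hsum : ∑ j ∈ T, incidence A j ≤ u := by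
        rw [sum_incidence]
        exact_mod_cast (card_le_card inter_subset_right).trans hA
      have hrest : 0 ≤ ∑ k ∈ Ico p (m + 1), (#(T \ s k) : ℝ) * (d k - d (k + 1)) :=
        sum_nonneg fun k hk ↦ mul_nonneg (Nat.cast_nonneg _)
          (sub_nonneg.2 (hsucc k (Nat.lt_succ_iff.1 (mem_Ico.1 hk).2)))
      rw [h]
      linarith
    · simpa [h, sum_sdiff_incidence hAp] using sum_sdiff_le_of_add_le_one hs hs_top hzd T hp

end MixPoint

section Separation

lemma mem_of_forall_exists_le {E : Type*} [AddCommGroup E] [Module ℝ E] [TopologicalSpace E]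
    [IsTopologicalAddGroup E] [ContinuousSMul ℝ E] [LocallyConvexSpace ℝ E] {C : Set E}
    (hC : Convex ℝ C) (hC_closed : IsClosed C) {x : E}
    (h : ∀ f : E →L[ℝ] ℝ, ∃ y ∈ C, f x ≤ f y) : x ∈ C := by
  by_contra hx
  obtain ⟨f, c, hlt, hgt⟩ := geometric_hahn_banach_closed_point hC hC_closed hx
  obtain ⟨y, hy, hxy⟩ := h f
  linarith [hlt y hy]

lemma exists_apply_prodMk_eq_sum_add {R ι M : Type*} [CommSemiring R] [Fintype ι]
    [AddCommMonoid M] [Module R M] (f : (ι → R) × M →ₗ[R] R) :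
    ∃ α : ι → R, ∀ z δ, f (z, δ) = ∑ j, α j * z j + f (0, δ) := by
  classical
  refine ⟨fun j ↦ f (fun i ↦ if j = i then 1 else 0, 0), fun z δ ↦ ?_⟩
  have hz := (f ∘ₗ LinearMap.inl R _ M).pi_apply_eq_sum_univ z
  simp only [LinearMap.comp_apply, LinearMap.inl_apply, smul_eq_mul] at hz
  rw [← zero_add δ, ← add_zero z, ← Prod.mk_add_mk, map_add, hz, add_zero]
  simp only [zero_add, mul_comm]

end Separation

lemma sum_Ico_mul_sub_eq {R : Type*} [CommRing R] (c d : ℕ → R) {p m : ℕ} (hp : p ≤ m) :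
    ∑ k ∈ Ico p (m + 1), c k * (d k - d (k + 1)) =
      c p * d p - ∑ i ∈ Icc (p + 1) m, (c (i - 1) - c i) * d i - c m * d (m + 1) := by
  induction m, hp using Nat.le_induction with
  | base => simp; ring
  | succ m hpm ih =>
    rw [sum_Ico_succ_top (by omega), ih, sum_Icc_succ_top (by omega), Nat.add_sub_cancel]
    ring

section Nested

variable {n m u : ℕ} {S : Fin m → Finset (Fin n)}

lemma SS_zero (S : Fin m → Finset (Fin n)) : SS n m S 0 = ∅ := by simp [SS]

lemma SS_top (S : Fin m → Finset (Fin n)) : SS n m S (m + 1) = univ := by simp [SS]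

lemma SS_succ (S : Fin m → Finset (Fin n)) (i : Fin m) : SS n m S (i + 1) = S i := by
  simp [SS]

lemma dd_zero (δ : Fin m → ℝ) : dd m δ 0 = 1 := by simp [dd]

lemma dd_top (δ : Fin m → ℝ) : dd m δ (m + 1) = 0 := by simp [dd]

lemma dd_succ (δ : Fin m → ℝ) (i : Fin m) : dd m δ (i + 1) = δ i := by
  simp [dd]

lemma exists_fin_eq_succ {k : ℕ} (hk : 1 ≤ k) (hkm : k ≤ m) : ∃ i : Fin m, k = i + 1 :=
  ⟨⟨k - 1, by omega⟩, by simp only; omega⟩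

lemma SS_mono (hS : Monotone S) : Monotone (SS n m S) := by
  refine monotone_nat_of_le_succ fun k ↦ ?_
  rcases Nat.eq_zero_or_pos k with rfl | hk
  · simp [SS_zero]
  · rcases lt_or_ge k m with hkm | hkm
    · obtain ⟨i, rfl⟩ := exists_fin_eq_succ hk hkm.le
      have hsucc : SS n m S (i + 1 + 1) = S ⟨i + 1, hkm⟩ := SS_succ S ⟨i + 1, hkm⟩
      rw [SS_succ, hsucc]
      exact hS (Fin.mk_le_mk.2 (Nat.le_succ i))
    · have htop : SS n m S (k + 1) = univ := by simp [SS, hkm]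
      simp [htop]

lemma dd_convexCombination (δ δ' : Fin m → ℝ) {a b : ℝ} (hab : a + b = 1) :
    dd m (a • δ + b • δ') = a • dd m δ + b • dd m δ' := by
  ext k
  simp only [dd, Pi.add_apply, Pi.smul_apply, smul_eq_mul]
  split_ifs <;> simp [hab]

lemma mixLe_iff {p : ℕ} (hp : p ≤ m) (T : Finset (Fin n)) (zd : (Fin n → ℝ) × (Fin m → ℝ)) :
    MixLe n m u S p T zd ↔
      ∑ j ∈ T, zd.1 j ≤ u * (1 - dd m zd.2 p) +
        ∑ k ∈ Ico p (m + 1), #(T \ SS n m S k) * (dd m zd.2 k - dd m zd.2 (k + 1)) := by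
  rw [MixLe, mixLeLHS, sum_Ico_mul_sub_eq (fun k ↦ (#(T \ SS n m S k) : ℝ)) _ hp, dd_top]
  constructor <;> intro h <;> linarith

/-- The point `(z, δ)` of the multilinear set whose support `{j | z j = 1}` is `A`. -/
def vertex (S : Fin m → Finset (Fin n)) (A : Finset (Fin n)) : (Fin n → ℝ) × (Fin m → ℝ) :=
  (incidence A, fun i ↦ if Disjoint A (S i) then 1 else 0)

lemma prod_one_sub_incidence {ι : Type*} [DecidableEq ι] (A T : Finset ι) :
    ∏ j ∈ T, (1 - incidence A j) = if Disjoint A T then 1 else 0 := by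
  split_ifs with hAT
  · exact prod_eq_one fun j hj ↦ by simp [incidence, disjoint_right.1 hAT hj]
  · obtain ⟨j, hjA, hjT⟩ := not_disjoint_iff.1 hAT
    exact prod_eq_zero hjT (by simp [incidence, hjA])

lemma Xset_eq_image_vertex (S : Fin m → Finset (Fin n)) :
    Xset n m 0 u S = vertex S '' {A | #A ≤ u} := by
  ext ⟨z, δ⟩
  constructor
  · rintro ⟨hz, -, hδ, -, hzu⟩
    dsimp only at hz hδ hzu
    obtain ⟨A, rfl⟩ : ∃ A, z = incidence A := by
      refine ⟨({j | z j = 1} : Finset (Fin n)), funext fun j ↦ ?_⟩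
      rcases hz j with h | h <;> simp [incidence, h]
    rw [sum_incidence, univ_inter, Nat.cast_le] at hzu
    refine ⟨A, hzu, Prod.ext rfl (funext fun i ↦ ?_)⟩
    exact ((hδ i).trans (prod_one_sub_incidence A (S i))).symm
  · rintro ⟨A, hA, h⟩
    obtain ⟨rfl, rfl⟩ := Prod.mk.inj h
    refine ⟨fun j ↦ ?_, fun i ↦ ?_, fun i ↦ (prod_one_sub_incidence A (S i)).symm, ?_, ?_⟩
    · simp only [incidence]
      split_ifs <;> simp
    · simp only
      split_ifs <;> simp
    · simpa using sum_nonneg fun j _ ↦ incidence_nonneg A j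
    · simpa [sum_incidence] using hA

lemma dd_vertex (S : Fin m → Finset (Fin n)) (A : Finset (Fin n)) {k : ℕ} (hk : k ≤ m) :
    dd m (vertex S A).2 k = if Disjoint A (SS n m S k) then 1 else 0 := by
  rcases Nat.eq_zero_or_pos k with rfl | hk0
  · simp [dd_zero, SS_zero]
  · obtain ⟨i, rfl⟩ := exists_fin_eq_succ hk0 hk
    rw [dd_succ, SS_succ, vertex]


lemma IsMixPoint.nestedLin {zd : (Fin n → ℝ) × (Fin m → ℝ)} (hm : 0 < m) (hu : 0 < u)
    (h : IsMixPoint (SS n m S) m u zd.1 (dd m zd.2)) : NestedLin n m 0 u S zd := by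
  refine ⟨?_, ?_, fun i j hj ↦ ?_, ?_, ?_, h.nonneg, fun j _ ↦ ?_,
    fun i _ hi ↦ h.succ_le i (by omega), fun i _ hi ↦ h.cover i (by omega)⟩
  · simpa using sum_nonneg fun j _ ↦ h.nonneg j
  · simpa [dd_top, SS_top, hu] using h.mix (m + 1) le_rfl univ
  · simpa [dd_succ] using h.add_le_one (i + 1) (by omega) j (by rwa [SS_succ])
  · have hcover := h.cover 0 hm
    rw [dd_zero, SS_zero, sdiff_empty] at hcover
    linarith
  · simpa [dd_top] using h.succ_le m le_rfl
  · simpa [dd_top] using h.add_le_one (m + 1) le_rfl j (by simp [SS_top])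

lemma dd_one_le_one_of_mixLe {zd : (Fin n → ℝ) × (Fin m → ℝ)} (hm : 0 < m) (hu : 0 < u)
    (h : MixLe n m u S 1 ∅ zd) : dd m zd.2 1 ≤ 1 := by
  have hmix := (mixLe_iff hm ∅ zd).1 h
  simp only [sum_empty, empty_sdiff, card_empty, Nat.cast_zero, zero_mul, sum_const_zero,
    add_zero] at hmix
  exact sub_nonneg.1 (nonneg_of_mul_nonneg_right hmix (Nat.cast_pos.2 hu))

lemma NestedLin.add_le_one {zd : (Fin n → ℝ) × (Fin m → ℝ)} (hm : 0 < m)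
    (h : NestedLin n m 0 u S zd) :
    ∀ i ≤ m + 1, ∀ j ∈ SS n m S i, zd.1 j + dd m zd.2 i ≤ 1 := by
  obtain ⟨-, -, hzd, -, hnonneg, -, hle_one, -, -⟩ := h
  have hinner {i : ℕ} (hi : 1 ≤ i) (him : i ≤ m) {j : Fin n} (hj : j ∈ SS n m S i) :
      zd.1 j + dd m zd.2 i ≤ 1 := by
    obtain ⟨i, rfl⟩ := exists_fin_eq_succ hi him
    rw [SS_succ] at hj
    simpa only [dd_succ] using hzd i j hj
  intro i hi j hj
  rcases hi.eq_or_lt with rfl | hi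
  · rw [dd_top, add_zero]
    by_cases hjm : j ∈ SS n m S m
    · linarith [hinner hm le_rfl hjm]
    · exact hle_one j hjm
  · rcases Nat.eq_zero_or_pos i with rfl | hi0
    · simp [SS_zero] at hj
    · exact hinner hi0 (by omega) hj

lemma NestedLin.isMixPoint {zd : (Fin n → ℝ) × (Fin m → ℝ)} (hS : Monotone S) (hm : 0 < m)
    (hu : 0 < u) (h : NestedLin n m 0 u S zd)
    (hmix : ∀ p, 1 ≤ p → p ≤ m → ∀ T : Finset (Fin n), #(T \ SS n m S p) ≤ u - 1 →
      MixLe n m u S p T zd) :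
    IsMixPoint (SS n m S) m u zd.1 (dd m zd.2) := by
  have hzd := h.add_le_one hm
  obtain ⟨-, hsum, -, hcover, hnonneg, hz, -, hsucc, hcovers⟩ := h
  refine ⟨hz, hzd, fun k hk ↦ ?_, fun k hk ↦ ?_, fun p hp T hT ↦ ?_⟩
  · rcases Nat.eq_zero_or_pos k with rfl | hk0
    · simpa [dd_zero] using dd_one_le_one_of_mixLe hm hu (hmix 1 le_rfl hm ∅ (by simp))
    · rcases hk.eq_or_lt with rfl | hk
      · rwa [dd_top]
      · exact hsucc k hk0 hk
  · rcases Nat.eq_zero_or_pos k with rfl | hk0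
    · rw [dd_zero, SS_zero, sdiff_empty]
      linarith
    · exact hcovers k hk0 hk
  · rcases Nat.eq_zero_or_pos p with rfl | hp0
    · simpa [dd_zero, SS_zero] using sum_sdiff_le_of_add_le_one (SS_mono hS) (SS_top S) hzd T hp
    · rcases hp.eq_or_lt with rfl | hp
      · simpa [dd_top] using
          (sum_le_sum_of_subset_of_nonneg (subset_univ T) fun j _ _ ↦ hz j).trans hsum
      · exact (mixLe_iff (by omega) T zd).1 (hmix p hp0 (by omega) T (by omega))

lemma nestedLin_and_mixLe_iff_isMixPoint {zd : (Fin n → ℝ) × (Fin m → ℝ)} (hS : Monotone S)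
    (hm : 0 < m) (hu : 0 < u) :
    (NestedLin n m 0 u S zd ∧ ∀ p, 1 ≤ p → p ≤ m → ∀ T : Finset (Fin n),
      #(T \ SS n m S p) ≤ u - 1 → MixLe n m u S p T zd) ↔
    IsMixPoint (SS n m S) m u zd.1 (dd m zd.2) := by
  refine ⟨fun h ↦ h.1.isMixPoint hS hm hu h.2, fun h ↦ ⟨h.nestedLin hm hu, ?_⟩⟩
  exact fun p _ hp T hT ↦ (mixLe_iff hp T zd).2 (h.mix p (by omega) T (by omega))

lemma convex_setOf_isMixPoint (S : Fin m → Finset (Fin n)) (u : ℕ) :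
    Convex ℝ {zd : (Fin n → ℝ) × (Fin m → ℝ) |
      IsMixPoint (SS n m S) m u zd.1 (dd m zd.2)} := by
  intro x hx y hy a b ha hb hab
  rw [Set.mem_ofPred_eq, Prod.snd_add, Prod.smul_snd, Prod.smul_snd, dd_convexCombination _ _ hab]
  exact hx.convexCombination hy ha hb hab

lemma isMixPoint_vertex (hS : Monotone S) {A : Finset (Fin n)} (hA : #A ≤ u) :
    IsMixPoint (SS n m S) m u (vertex S A).1 (dd m (vertex S A).2) :=
  isMixPoint_incidence (SS_mono hS) (SS_top S) hA (fun _ hk ↦ dd_vertex S A hk) (dd_top _)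

lemma sum_smul_vertex_snd (K : Finset ℕ) (w : ℕ → ℝ) (A : ℕ → Finset (Fin n)) (i : Fin m) :
    (∑ k ∈ K, w k • vertex S (A k)).2 i = ∑ k ∈ K with Disjoint (A k) (S i), w k := by
  simp only [Prod.snd_sum, Prod.smul_snd, Finset.sum_apply, vertex, Pi.smul_apply, smul_eq_mul,
    mul_ite, mul_one, mul_zero, sum_filter]

lemma IsMixPoint.exists_mem_convexHull (hS : Monotone S) (hu : 0 < u)
    {zd : (Fin n → ℝ) × (Fin m → ℝ)} (h : IsMixPoint (SS n m S) m u zd.1 (dd m zd.2))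
    (α : Fin n → ℝ) :
    ∃ y ∈ convexHull ℝ (Xset n m 0 u S), y.2 = zd.2 ∧ ∑ j, α j * zd.1 j ≤ ∑ j, α j * y.1 j := by
  choose A hA using fun k ↦
    exists_isGreedy α hu (E := layer (SS n m S) m k) (F := SS n m S k) (disjoint_layer _ m k)
  let w : ℕ → ℝ := fun k ↦ dd m zd.2 k - dd m zd.2 (k + 1)
  refine ⟨∑ k ∈ range (m + 1), w k • vertex S (A k), ?_, ?_, ?_⟩
  · refine (convex_convexHull ℝ _).sum_mem (fun k hk ↦ ?_) ?_ fun k _ ↦ subset_convexHull ℝ _ ?_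
    · exact sub_nonneg.2 (h.succ_le k (Nat.lt_succ_iff.1 (mem_range.1 hk)))
    · rw [sum_range_sub', dd_zero, dd_top, sub_zero]
    · rw [Xset_eq_image_vertex]
      exact ⟨A k, (hA k).card_le, rfl⟩
  · ext i
    rw [sum_smul_vertex_snd, ← dd_succ zd.2 i, ← SS_succ S i]
    exact h.sum_decrement_of_disjoint (SS_mono hS) (dd_top _) hA i.2
  · rw [Prod.fst_sum]
    exact h.sum_mul_le_of_isGreedy (SS_mono hS) (SS_top S) (dd_zero _) hu hA

lemma convexHull_Xset_eq_setOf_isMixPoint (hS : Monotone S) (hu : 0 < u) :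
    convexHull ℝ (Xset n m 0 u S) =
      {zd : (Fin n → ℝ) × (Fin m → ℝ) | IsMixPoint (SS n m S) m u zd.1 (dd m zd.2)} := by
  refine (convexHull_min ?_ (convex_setOf_isMixPoint S u)).antisymm fun x hx ↦ ?_
  · rw [Xset_eq_image_vertex]
    rintro _ ⟨A, hA, rfl⟩
    exact isMixPoint_vertex hS hA
  · have hfin : (Xset n m 0 u S).Finite := by
      rw [Xset_eq_image_vertex]
      exact (Set.toFinite _).image _
    refine mem_of_forall_exists_le (convex_convexHull ℝ _) (hfin.isClosed_convexHull ℝ) fun f ↦ ?_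
    obtain ⟨α, hα⟩ := exists_apply_prodMk_eq_sum_add f.toLinearMap
    obtain ⟨⟨z, δ⟩, hy, rfl, hle⟩ := IsMixPoint.exists_mem_convexHull hS hu hx α
    refine ⟨_, hy, ?_⟩
    exact (hα _ _).trans_le ((add_le_add_left hle _).trans_eq (hα _ _).symm)

end Nested

theorem stmt11_general (n m u : ℕ) (S : Fin m → Finset (Fin n)) (hm : 0 < m) (hu : 0 < u)
    (hS : Monotone S) :
    convexHull ℝ (Xset n m 0 u S) =
      {zd : (Fin n → ℝ) × (Fin m → ℝ) |
        NestedLin n m 0 u S zd ∧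
        ∀ p : ℕ, 1 ≤ p → p ≤ m → ∀ S' : Finset (Fin n),
          (S' \ SS n m S p).card ≤ u - 1 → MixLe n m u S p S' zd} := by
  rw [convexHull_Xset_eq_setOf_isMixPoint hS hu]
  exact Set.ext fun zd ↦ (nestedLin_and_mixLe_iff_isMixPoint hS hm hu).symm

theorem stmt11 (n m l u : ℕ) (S : Fin m → Finset (Fin n))
    (hn : 0 < n) (hm : 0 < m) (hu : 2 ≤ u) (hlu : l < u)
    (hnested : ∀ i j : Fin m, i < j → S i ⊂ S j)
    (hS1 : 2 ≤ (SS n m S 1).card)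
    (hSm : l ≤ n - (SS n m S m).card)
    :
    convexHull ℝ (Xset n m 0 u S) =
      {zd : (Fin n → ℝ) × (Fin m → ℝ) |
        NestedLin n m 0 u S zd ∧
        ∀ p : ℕ, 1 ≤ p → p ≤ m → ∀ S' : Finset (Fin n),
          (S' \ SS n m S p).card ≤ u - 1 → MixLe n m u S p S' zd} := by
  exact stmt11_general n m u S hm (by omega) (StrictMono.monotone fun i j h ↦ hnested i j h)
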